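/- Let p be an odd prime and (u₁,u₂,u₃) a triple of nonzero elements of 𝔽_p. Define P_0 = T, P_{n+1} = F·P_n^p with F = (T²+4)^((p-1)/2), and R = T^p − T·F in 𝔽_p[T]. Define the sequence (a_m)_{m≥1} of partial quotients in 𝔽_p[T] as the concatenation of the finite blocks C_0, C_1, C_2, …, where C_{2n} = A_{1,2n} followed by B_{1,2n}, C_{2n+1} = A_{2,2n+1} followed by B_{2,2n+1}, with A_{1,n} = (u₁T, u₂P_n, u₃T), A_{2,n} = ((4u₃)⁻¹T, 4u₁u₂u₃P_n, (4u₁)⁻¹T), B_{1,n} = the pair ((2u₃)⁻¹T, 2u₃T) repeated (p^n−1)/2 times, and B_{2,n} = the pair (2u₁T, (2u₁)⁻¹T) repeated (p^n−1)/2 times. Define continuants x_m, y_m ∈ 𝔽_p[T] by x_0 = 1, x_1 = a_1, y_0 = 0, y_1 = 1, and K_m = a_m·K_{m−1} + K_{m−2}. Let K = 𝔽_p((1/T)) (the Laurent series field 𝔽_p((X)) with T = X⁻¹ and its valuation topology) and φ : 𝔽_p[T] → K the map T ↦ X⁻¹. Then the convergents φ(x_m)/φ(y_m) converge in K to an element α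 satisfying φ(y₃)·α^{p+1} − φ(x₃)·α^p + (4u₁u₃·φ(y₂)·φ(F) − u₁·φ(y₃)·φ(R))·α + u₁·φ(x₃)·φ(R) − 4u₁u₃·φ(x₂)·φ(F) = 0, where x₂ = u₁u₂T²+1, y₂ = u₂T, x₃ = u₁u₂u₃T³+(u₁+u₃)T, y₃ = u₂u₃T²+1. -/

import Mathlib

/-!
Write `M(a) = [[a, 1], [1, 0]]`. The product `M(a₁) ⋯ M(a_m)` has first column `(x_m, y_m)`, so
everything is a statement about products of such matrices over `K = 𝔽_p((1/T))`.

* **The blocks in closed form.** Since `2 M(T) = T + D` with `D² = T² + 4` scalar, the Frobenius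
  identity gives `2 M(T)^(p^n) = T^(p^n) + (T² + 4)^((p^n - 1)/2) D` in characteristic `p`
  (`Mm_pow`). Conjugating by a diagonal matrix yields the product over the periodic part of `C_n`
  (`Lm_pairs_pow`). Together with `P_n = T^(p^n) (T² + 4)^((p^n - 1)/2)` (`evalT_Pseq`) this
  expresses the matrix `Q_n` of the block `C_n` through `T`, `T^(p^n)` and a power of `T² + 4`.
* **Frobenius intertwining.** With the upper triangular matrices `S_n` (`Sm`), depending only on
  the parity of `n`, one has `Frob(Q_n) S_{n+1} = S_n Q_{n+1}` (`step`). It is checked factor by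
  factor (`step_even`, `step_odd`); only the last factor uses `F² (T² + 4) = T^(2p) + 4`.
  Telescoping gives `Frob(Q_0 ⋯ Q_{n-1}) S_n = S_0 W` where `Q_0 ⋯ Q_n = Q_0 W` (`exists_tail`).
* **The equation.** As `S_n` is upper triangular, comparing first columns ties `(X^p, Y^p)` to
  `(X', Y')`, where `X/Y` and `X'/Y'` are the convergents at the ends of consecutive blocks. Up
  to a common factor this says `α' = f(α^p)` for the expected Möbius map `f`
  (`column_relation`).
* **The limit.** All partial quotients have positive degree, so the convergents are Cauchy
  (`cauchy_of_recurrence`) and `K` is complete; passing to the limit along the ends of the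
  blocks turns the relation between consecutive values into the equation for `α`.
-/

open Polynomial Filter

/-- `F = (T^2+4)^((p-1)/2)` in `𝔽_p[T]`. -/
noncomputable def Fpoly (p : ℕ) : Polynomial (ZMod p) :=
  (Polynomial.X ^ 2 + 4) ^ ((p - 1) / 2)

/-- The sequence `P 0 = T`, `P (n+1) = F * (P n)^p`. -/
noncomputable def Pseq (p : ℕ) : ℕ → Polynomial (ZMod p)
  | 0 => Polynomial.X
  | n + 1 => Fpoly p * (Pseq p n) ^ p

/-- The block `C_n` of partial quotients: for `n` even it is
`A_{1,n} = (u₁T, u₂Pₙ, u₃T)` followed by `B_{1,n} = ((2u₃)⁻¹T, 2u₃T)` repeated `(pⁿ-1)/2`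
times; for `n` odd it is `A_{2,n} = ((4u₃)⁻¹T, 4u₁u₂u₃Pₙ, (4u₁)⁻¹T)` followed by
`B_{2,n} = (2u₁T, (2u₁)⁻¹T)` repeated `(pⁿ-1)/2` times. -/
noncomputable def blockC (p : ℕ) (u₁ u₂ u₃ : ZMod p) (n : ℕ) :
    List (Polynomial (ZMod p)) :=
  if n % 2 = 0 then
    [C u₁ * X, C u₂ * Pseq p n, C u₃ * X] ++
      (List.replicate ((p ^ n - 1) / 2) [C (2 * u₃)⁻¹ * X, C (2 * u₃) * X]).flatten
  else
    [C (4 * u₃)⁻¹ * X, C (4 * u₁ * u₂ * u₃) * Pseq p n, C (4 * u₁)⁻¹ * X] ++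
      (List.replicate ((p ^ n - 1) / 2) [C (2 * u₁) * X, C (2 * u₁)⁻¹ * X]).flatten

/-- The sequence of partial quotients `a_{m+1}` (`m = 0, 1, 2, …`), obtained as the
concatenation of the blocks `C_0, C_1, C_2, …`. -/
noncomputable def aSeq (p : ℕ) (u₁ u₂ u₃ : ZMod p) (m : ℕ) : Polynomial (ZMod p) :=
  (((List.range (m + 1)).map (blockC p u₁ u₂ u₃)).flatten).getD m 0

/-- Continuants: `K 0 = k0`, `K 1 = k1`, `K m = a_m * K (m-1) + K (m-2)`. -/
noncomputable def continuant (p : ℕ) (u₁ u₂ u₃ : ZMod p)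
    (k0 k1 : Polynomial (ZMod p)) : ℕ → Polynomial (ZMod p)
  | 0 => k0
  | 1 => k1
  | m + 2 => aSeq p u₁ u₂ u₃ (m + 1) * continuant p u₁ u₂ u₃ k0 k1 (m + 1)
      + continuant p u₁ u₂ u₃ k0 k1 m

/-- Numerators of the convergents: `x 0 = 1`, `x 1 = a 1`. -/
noncomputable def xCont (p : ℕ) (u₁ u₂ u₃ : ZMod p) : ℕ → Polynomial (ZMod p) :=
  continuant p u₁ u₂ u₃ 1 (aSeq p u₁ u₂ u₃ 0)

/-- Denominators of the convergents: `y 0 = 0`, `y 1 = 1`. -/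
noncomputable def yCont (p : ℕ) (u₁ u₂ u₃ : ZMod p) : ℕ → Polynomial (ZMod p) :=
  continuant p u₁ u₂ u₃ 0 1

/-- The element `T = X⁻¹` of the Laurent series field `𝔽_p((X)) = 𝔽_p((1/T))`. -/
noncomputable def Tvar (p : ℕ) [Fact p.Prime] : LaurentSeries (ZMod p) :=
  (↑(PowerSeries.X : PowerSeries (ZMod p)) : LaurentSeries (ZMod p))⁻¹

/-- The evaluation map `𝔽_p[T] → 𝔽_p((1/T))`, `T ↦ X⁻¹`. -/
noncomputable def evalT (p : ℕ) [Fact p.Prime] :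
    Polynomial (ZMod p) →+* LaurentSeries (ZMod p) :=
  (Polynomial.aeval (Tvar p)).toRingHom

/-! ### Products of continuant matrices over the periodic blocks -/

/-- The continuant matrix `M(a)` of a single partial quotient. -/
def Mm {R : Type*} [CommRing R] (a : R) : Matrix (Fin 2) (Fin 2) R := !![a, 1; 1, 0]

/-- The product `M(a₁) ⋯ M(a_m)` over a list of partial quotients; its first column is formed by
the numerator and the denominator of `[a₁, …, a_m]`. -/
def Lm {R : Type*} [CommRing R] (l : List R) : Matrix (Fin 2) (Fin 2) R := (l.map Mm).prod

/-- Closed form of the matrix of the pair `(c T, c⁻¹ T)` repeated `(p^n - 1)/2` times, to be used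
with `U = (T² + 4)^((p^n - 1)/2)` and `V = T^(p^n)`. -/
def Bm {K : Type*} [Field K] (c T U V : K) : Matrix (Fin 2) (Fin 2) K :=
  !![U, c * ((V - T * U) / 2); c⁻¹ * ((V - T * U) / 2), U - T * ((V - T * U) / 2)]

/-- Characteristic `p` evaluation of `M(T)^(p^n - 1)`: with `D = 2 M(T) - T` one has
`D² = T² + 4`, so the `p^n`-th power of `2 M(T) = T + D` is `T^(p^n) + D^(p^n)`, and dividing by
`M(T)` gives the claim. -/
theorem Mm_pow {K : Type*} [Field K] (p : ℕ) [Fact p.Prime] [CharP K p] (hodd : Odd p)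
    (T : K) (n : ℕ) :
    Mm T ^ (p ^ n - 1) = Bm 1 T ((T ^ 2 + 4) ^ ((p ^ n - 1) / 2)) (T ^ p ^ n) := by
  have hp := (Fact.out : p.Prime)
  have h2 : (2 : K) ≠ 0 := Ring.two_ne_zero (by
    rw [ringChar.eq K p]; rintro rfl; revert hodd; decide)
  obtain ⟨N, hN⟩ : Odd (p ^ n) := hodd.pow
  set U := (T ^ 2 + 4) ^ ((p ^ n - 1) / 2) with hU
  set D : Matrix (Fin 2) (Fin 2) K := !![T, 2; 2, -T] with hD
  have hD2 : D ^ 2 = Matrix.scalar (Fin 2) (T ^ 2 + 4) := by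
    rw [hD, pow_two]
    ext i j
    fin_cases i <;> fin_cases j <;> simp [Matrix.mul_apply, Fin.sum_univ_two] <;> ring
  have hDq : D ^ p ^ n = Matrix.scalar (Fin 2) U * D := by
    rw [hU, hN, pow_succ, pow_mul, hD2, ← map_pow]
    congr 3
    omega
  have hM : Matrix.scalar (Fin 2) (2 : K) * Mm T = Matrix.scalar (Fin 2) T + D := by
    rw [hD]
    ext i j
    fin_cases i <;> fin_cases j <;> simp [Mm] <;> ring
  have h2q : (2 : K) ^ p ^ n = 2 := by
    have := map_ofNat (iterateFrobenius K p n) 2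
    simpa [iterateFrobenius_def] using this
  have hc : ∀ (a : K) (A : Matrix (Fin 2) (Fin 2) K), Commute (Matrix.scalar (Fin 2) a) A :=
    fun a A => Matrix.scalar_commute a (fun _ => Commute.all _ _) A
  have hq : Matrix.scalar (Fin 2) (2 : K) * Mm T ^ p ^ n
      = Matrix.scalar (Fin 2) (T ^ p ^ n) + Matrix.scalar (Fin 2) U * D := by
    have : (Matrix.scalar (Fin 2) (2 : K) * Mm T) ^ p ^ n
        = (Matrix.scalar (Fin 2) T + D) ^ p ^ n := by rw [hM]
    rw [(hc _ _).mul_pow, add_pow_char_pow_of_commute _ _ (hc _ _), hDq, ← map_pow, ← map_pow,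
      h2q] at this
    exact this
  have hinv : !![0, 1; 1, -T] * Mm T = 1 := by
    ext i j
    fin_cases i <;> fin_cases j <;> simp [Mm, Matrix.mul_apply, Fin.sum_univ_two]
  have hs : Mm T ^ p ^ n = Mm T * Mm T ^ (p ^ n - 1) := by
    rw [← pow_succ', Nat.sub_add_cancel (pow_pos hp.pos n)]
  have h3 : Mm T ^ (p ^ n - 1) = !![0, 1; 1, -T] * Mm T ^ p ^ n := by
    rw [hs, ← mul_assoc, hinv, one_mul]
  have h4 : Mm T ^ p ^ n = Matrix.scalar (Fin 2) (2⁻¹ : K) *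
      (Matrix.scalar (Fin 2) (T ^ p ^ n) + Matrix.scalar (Fin 2) U * D) := by
    rw [← hq, ← mul_assoc, ← map_mul, inv_mul_cancel₀ h2, map_one, one_mul]
  rw [h3, h4, hD]
  ext i j
  fin_cases i <;> fin_cases j <;>
    simp [Bm, Matrix.mul_apply, Fin.sum_univ_two, Matrix.diagonal_apply] <;> field_simp <;> ring

theorem Lm_append {R : Type*} [CommRing R] (l l' : List R) : Lm (l ++ l') = Lm l * Lm l' := by
  simp [Lm]

/-- `M(c T) M(c⁻¹ T)` is conjugate to `M(T)²` by `diag(c, 1)`. -/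
theorem Lm_pairs {K : Type*} [Field K] (c T : K) (hc : c ≠ 0) (N : ℕ) :
    Lm (List.replicate N [c * T, c⁻¹ * T]).flatten
      = !![c, 0; 0, 1] * Mm T ^ (2 * N) * !![c⁻¹, 0; 0, 1] := by
  have h1 : (!![c, 0; 0, 1] : Matrix (Fin 2) (Fin 2) K) * !![c⁻¹, 0; 0, 1] = 1 := by
    ext i j
    fin_cases i <;> fin_cases j <;> simp [hc]
  have h2 : (!![c⁻¹, 0; 0, 1] : Matrix (Fin 2) (Fin 2) K) * !![c, 0; 0, 1] = 1 := by
    ext i j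
    fin_cases i <;> fin_cases j <;> simp [hc]
  have h3 : Mm (c * T) * Mm (c⁻¹ * T)
      = !![c, 0; 0, 1] * Mm T ^ 2 * !![c⁻¹, 0; 0, 1] := by
    ext i j
    fin_cases i <;> fin_cases j <;> simp [Mm, pow_two] <;> field_simp
  induction N with
  | zero => simp [Lm, h1]
  | succ N ih =>
    rw [List.replicate_succ, List.flatten_cons, Lm_append, ih, mul_add, mul_one, add_comm (2 * N),
      pow_add]
    have : Lm [c * T, c⁻¹ * T] = !![c, 0; 0, 1] * Mm T ^ 2 * !![c⁻¹, 0; 0, 1] := by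
      rw [← h3]; simp [Lm]
    rw [this]
    simp only [mul_assoc]
    rw [← mul_assoc !![c⁻¹, 0; 0, 1] !![c, 0; 0, 1], h2, one_mul]

theorem Lm_pairs_pow {K : Type*} [Field K] (p : ℕ) [Fact p.Prime] [CharP K p] (hodd : Odd p)
    (c T : K) (hc : c ≠ 0) (n : ℕ) :
    Lm (List.replicate ((p ^ n - 1) / 2) [c * T, c⁻¹ * T]).flatten
      = Bm c T ((T ^ 2 + 4) ^ ((p ^ n - 1) / 2)) (T ^ p ^ n) := by
  obtain ⟨N, hN⟩ : Odd (p ^ n) := hodd.pow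
  have h : 2 * ((p ^ n - 1) / 2) = p ^ n - 1 := by omega
  rw [Lm_pairs c T hc, h, Mm_pow p hodd]
  ext i j
  fin_cases i <;> fin_cases j <;> simp [Bm, hc, mul_comm]

/-! ### The Frobenius intertwining relation -/

/-- If each `Bᵢ` is intertwined with `Aᵢ` through `S, D₁, D₂, D₃, S'`, then so are the products. -/
theorem chain_mul {M : Type*} [Monoid M] {S S' A₁ A₂ A₃ A₄ B₁ B₂ B₃ B₄ D₁ D₂ D₃ : M}
    (h₁ : S * A₁ = B₁ * D₁) (h₂ : D₁ * A₂ = B₂ * D₂) (h₃ : D₂ * A₃ = B₃ * D₃)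
    (h₄ : D₃ * A₄ = B₄ * S') : B₁ * B₂ * B₃ * B₄ * S' = S * (A₁ * A₂ * A₃ * A₄) := by
  rw [mul_assoc _ B₄, ← h₄, ← mul_assoc _ D₃, mul_assoc _ B₃, ← h₃, ← mul_assoc _ D₂,
    mul_assoc _ B₂, ← h₂, ← mul_assoc _ D₁, ← h₁]
  simp only [mul_assoc]

/-- The intertwining relation for a block of even index, before specializing `a = T^p`,
`F = (T² + 4)^((p - 1)/2)`. Each partial quotient of the next block is transported separately. -/
theorem step_even {K : Type*} [Field K] (h2 : (2 : K) ≠ 0) (u₁ u₂ u₃ T a F P U V : K)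
    (hu₁ : u₁ ≠ 0) (hu₃ : u₃ ≠ 0) (h : F ^ 2 * (T ^ 2 + 4) = a ^ 2 + 4) :
    (Mm (u₁ * a) * Mm (u₂ * P) * Mm (u₃ * a) * Bm (2 * u₃)⁻¹ a U V) *
        !![F, u₁ * (a - T * F); 0, 4 * u₁ * u₃]
      = !![4 * u₁ * u₃ * F, u₁ * (a - T * F); 0, 1] *
        (Mm ((4 * u₃)⁻¹ * T) * Mm (4 * u₁ * u₂ * u₃ * (F * P)) * Mm ((4 * u₁)⁻¹ * T) *
          Bm (2 * u₁) T (F * U) V) := by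
  have h4 : (4 : K) ≠ 0 := by
    have : (4 : K) = 2 * 2 := by norm_num
    rw [this]; exact mul_ne_zero h2 h2
  have e1 : !![4 * u₁ * u₃ * F, u₁ * (a - T * F); 0, 1] * Mm ((4 * u₃)⁻¹ * T)
      = Mm (u₁ * a) * !![1, 0; 0, 4 * u₁ * u₃ * F] := by
    ext i j
    fin_cases i <;> fin_cases j <;> simp [Mm] <;> field_simp <;> ring
  have e2 : !![1, 0; 0, 4 * u₁ * u₃ * F] * Mm (4 * u₁ * u₂ * u₃ * (F * P))
      = Mm (u₂ * P) * !![4 * u₁ * u₃ * F, 0; 0, 1] := by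
    ext i j
    fin_cases i <;> fin_cases j <;> simp [Mm] <;> ring
  have e3 : !![4 * u₁ * u₃ * F, 0; 0, 1] * Mm ((4 * u₁)⁻¹ * T)
      = Mm (u₃ * a) * !![1, 0; -(u₃ * (a - T * F)), 4 * u₁ * u₃ * F] := by
    ext i j
    fin_cases i <;> fin_cases j <;> simp [Mm] <;> field_simp <;> ring
  -- the only factor for which the hypothesis `h` on `F` is needed
  have e4 : !![1, 0; -(u₃ * (a - T * F)), 4 * u₁ * u₃ * F] * Bm (2 * u₁) T (F * U) V
      = Bm (2 * u₃)⁻¹ a U V * !![F, u₁ * (a - T * F); 0, 4 * u₁ * u₃] := by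
    ext i j
    fin_cases i <;> fin_cases j <;> simp [Bm] <;> field_simp <;>
      first | ring1 | linear_combination 2 * U * h
  exact chain_mul e1 e2 e3 e4

/-- The analogue of `step_even` for a block of odd index. -/
theorem step_odd {K : Type*} [Field K] (h2 : (2 : K) ≠ 0) (u₁ u₂ u₃ T a F P U V : K)
    (hu₁ : u₁ ≠ 0) (hu₃ : u₃ ≠ 0) (h : F ^ 2 * (T ^ 2 + 4) = a ^ 2 + 4) :
    (Mm ((4 * u₃)⁻¹ * a) * Mm (4 * u₁ * u₂ * u₃ * P) * Mm ((4 * u₁)⁻¹ * a) *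
          Bm (2 * u₁) a U V) * !![4 * u₁ * u₃ * F, u₁ * (a - T * F); 0, 1]
      = !![F, u₁ * (a - T * F); 0, 4 * u₁ * u₃] *
        (Mm (u₁ * T) * Mm (u₂ * (F * P)) * Mm (u₃ * T) * Bm (2 * u₃)⁻¹ T (F * U) V) := by
  have h4 : (4 : K) ≠ 0 := by
    have : (4 : K) = 2 * 2 := by norm_num
    rw [this]; exact mul_ne_zero h2 h2
  have e1 : !![F, u₁ * (a - T * F); 0, 4 * u₁ * u₃] * Mm (u₁ * T)
      = Mm ((4 * u₃)⁻¹ * a) * !![4 * u₁ * u₃, 0; 0, F] := by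
    ext i j
    fin_cases i <;> fin_cases j <;> simp [Mm] <;> field_simp <;> ring
  have e2 : !![4 * u₁ * u₃, 0; 0, F] * Mm (u₂ * (F * P))
      = Mm (4 * u₁ * u₂ * u₃ * P) * !![F, 0; 0, 4 * u₁ * u₃] := by
    ext i j
    fin_cases i <;> fin_cases j <;> simp [Mm] <;> ring
  have e3 : !![F, 0; 0, 4 * u₁ * u₃] * Mm (u₃ * T)
      = Mm ((4 * u₁)⁻¹ * a) * !![4 * u₁ * u₃, 0; -(u₃ * (a - T * F)), F] := by
    ext i j
    fin_cases i <;> fin_cases j <;> simp [Mm] <;> field_simp <;> ring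
  -- the only factor for which the hypothesis `h` on `F` is needed
  have e4 : !![4 * u₁ * u₃, 0; -(u₃ * (a - T * F)), F] * Bm (2 * u₃)⁻¹ T (F * U) V
      = Bm (2 * u₁) a U V * !![4 * u₁ * u₃ * F, u₁ * (a - T * F); 0, 1] := by
    ext i j
    fin_cases i <;> fin_cases j <;> simp [Bm] <;> field_simp <;>
      first | ring1 | linear_combination U * h
  exact chain_mul e1 e2 e3 e4


/-- The power `(T² + 4)^((p^n - 1)/2)`; for `n = 1` it is `F`. -/
noncomputable def Um {K : Type*} [Field K] (p : ℕ) (T : K) (n : ℕ) : K :=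
  (T ^ 2 + 4) ^ ((p ^ n - 1) / 2)

/-- The matrix of the block `C_n`, with the product over its periodic part replaced by the closed
form `Bm` and `P_n` by `T^(p^n) (T² + 4)^((p^n - 1)/2)`; see `Lm_block`. -/
noncomputable def Qm {K : Type*} [Field K] (p : ℕ) (u₁ u₂ u₃ T : K) (n : ℕ) :
    Matrix (Fin 2) (Fin 2) K :=
  if n % 2 = 0 then
    Mm (u₁ * T) * Mm (u₂ * (T ^ p ^ n * Um p T n)) * Mm (u₃ * T) *
      Bm (2 * u₃)⁻¹ T (Um p T n) (T ^ p ^ n)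
  else
    Mm ((4 * u₃)⁻¹ * T) * Mm (4 * u₁ * u₂ * u₃ * (T ^ p ^ n * Um p T n)) *
      Mm ((4 * u₁)⁻¹ * T) * Bm (2 * u₁) T (Um p T n) (T ^ p ^ n)

/-- The upper triangular matrix intertwining the Frobenius image of the `n`-th block with the block
of index `n + 1`; its upper right entry is `u₁ R`, and it depends only on the parity of `n`. -/
noncomputable def Sm {K : Type*} [Field K] (p : ℕ) (u₁ u₃ T : K) (n : ℕ) :
    Matrix (Fin 2) (Fin 2) K :=
  if n % 2 = 0 then
    !![4 * u₁ * u₃ * Um p T 1, u₁ * (T ^ p - T * Um p T 1); 0, 1]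
  else
    !![Um p T 1, u₁ * (T ^ p - T * Um p T 1); 0, 4 * u₁ * u₃]

theorem Um_zero {K : Type*} [Field K] (p : ℕ) (T : K) : Um p T 0 = 1 := by simp [Um]

theorem Um_succ {K : Type*} [Field K] (p : ℕ) (hodd : Odd p) (T : K) (n : ℕ) :
    Um p T (n + 1) = Um p T 1 * Um p T n ^ p := by
  unfold Um
  rw [← pow_mul, ← pow_add]
  congr 1
  obtain ⟨M, hM⟩ := hodd
  obtain ⟨N, hN⟩ : Odd (p ^ n) := Odd.pow ⟨M, hM⟩
  rw [pow_succ, pow_one, hN]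
  have h1 : (2 * N + 1 - 1) / 2 = N := by omega
  have h2 : (p - 1) / 2 = M := by omega
  have h3 : (2 * N + 1) * p - 1 = 2 * (N * p + M) := by
    rw [hM]
    have : (2 * N + 1) * (2 * M + 1) = 2 * (N * (2 * M + 1) + M) + 1 := by ring
    omega
  rw [h1, h2, h3]
  omega

/-- `F² (T² + 4) = (T² + 4)^p = T^(2p) + 4`. -/
theorem Um_one_sq {K : Type*} [Field K] (p : ℕ) [Fact p.Prime] [CharP K p] (hodd : Odd p)
    (T : K) : Um p T 1 ^ 2 * (T ^ 2 + 4) = (T ^ p) ^ 2 + 4 := by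
  have h4 : (4 : K) ^ p = 4 := by
    have := map_ofNat (frobenius K p) 4
    simpa [frobenius_def] using this
  unfold Um
  obtain ⟨M, hM⟩ := hodd
  have h : (p ^ 1 - 1) / 2 * 2 + 1 = p := by rw [pow_one]; omega
  rw [← pow_mul, ← pow_succ, h, add_pow_char, h4]
  ring

theorem frob_Mm {K : Type*} [Field K] (p : ℕ) [Fact p.Prime] [CharP K p] (a : K) :
    (frobenius K p).mapMatrix (Mm a) = Mm (a ^ p) := by
  ext i j
  fin_cases i <;> fin_cases j <;> simp [Mm, frobenius_def, (Fact.out : p.Prime).ne_zero]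

theorem frob_Bm {K : Type*} [Field K] (p : ℕ) [Fact p.Prime] [CharP K p] (c T U V : K)
    (hc : c ^ p = c) :
    (frobenius K p).mapMatrix (Bm c T U V) = Bm c (T ^ p) (U ^ p) (V ^ p) := by
  have hf : frobenius K p c = c := hc
  have h2p : (2 : K) ^ p = 2 := by
    have := map_ofNat (frobenius K p) 2
    simpa [frobenius_def] using this
  ext i j
  fin_cases i <;> fin_cases j <;> simp [Bm, hf] <;> simp [frobenius_def, h2p]

/-- `Frob(Q_n) S_{n+1} = S_n Q_{n+1}`: the Frobenius image of a block matrix is carried to the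
matrix of the following block. -/
theorem step {K : Type*} [Field K] (p : ℕ) [Fact p.Prime] [CharP K p] (hodd : Odd p)
    (u₁ u₂ u₃ T : K) (hu₁ : u₁ ≠ 0) (hu₃ : u₃ ≠ 0) (h₁ : u₁ ^ p = u₁) (h₂ : u₂ ^ p = u₂)
    (h₃ : u₃ ^ p = u₃) (n : ℕ) :
    (frobenius K p).mapMatrix (Qm p u₁ u₂ u₃ T n) * Sm p u₁ u₃ T (n + 1)
      = Sm p u₁ u₃ T n * Qm p u₁ u₂ u₃ T (n + 1) := by
  have h2 : (2 : K) ≠ 0 := Ring.two_ne_zero (by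
    rw [ringChar.eq K p]; rintro rfl; revert hodd; decide)
  have h4p : (4 : K) ^ p = 4 := by
    have := map_ofNat (frobenius K p) 4
    simpa [frobenius_def] using this
  have h2p : (2 : K) ^ p = 2 := by
    have := map_ofNat (frobenius K p) 2
    simpa [frobenius_def] using this
  have hV : T ^ p ^ (n + 1) = (T ^ p ^ n) ^ p := by rw [← pow_mul, pow_succ]
  have hP : T ^ p ^ (n + 1) * Um p T (n + 1) = Um p T 1 * (T ^ p ^ n * Um p T n) ^ p := by
    rw [hV, Um_succ p hodd]; ring
  unfold Qm Sm
  rcases Nat.mod_two_eq_zero_or_one n with hn | hn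
  · have hn' : ¬ (n + 1) % 2 = 0 := by omega
    rw [if_pos hn, if_pos hn, if_neg hn', if_neg hn']
    simp only [map_mul, frob_Mm]
    rw [frob_Bm _ _ _ _ _ (by rw [inv_pow, mul_pow, h2p, h₃])]
    simp only [mul_pow u₁, mul_pow u₂, mul_pow u₃, h₁, h₂, h₃]
    rw [hP, hV, Um_succ p hodd T n]
    exact step_even h2 u₁ u₂ u₃ T (T ^ p) _ _ _ _ hu₁ hu₃ (Um_one_sq p hodd T)
  · have hn' : (n + 1) % 2 = 0 := by omega
    have hn'' : ¬ n % 2 = 0 := by omega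
    rw [if_pos hn', if_pos hn', if_neg hn'', if_neg hn'']
    simp only [map_mul, frob_Mm]
    rw [frob_Bm _ _ _ _ _ (by rw [mul_pow, h2p, h₁])]
    have e1 : ((4 * u₃)⁻¹ * T) ^ p = (4 * u₃)⁻¹ * T ^ p := by
      rw [mul_pow, inv_pow, mul_pow, h4p, h₃]
    have e2 : ((4 * u₁)⁻¹ * T) ^ p = (4 * u₁)⁻¹ * T ^ p := by
      rw [mul_pow, inv_pow, mul_pow, h4p, h₁]
    have e3 : (4 * u₁ * u₂ * u₃ * (T ^ p ^ n * Um p T n)) ^ p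
        = 4 * u₁ * u₂ * u₃ * (T ^ p ^ n * Um p T n) ^ p := by
      rw [mul_pow _ (T ^ p ^ n * Um p T n), mul_pow, mul_pow, mul_pow, h4p, h₁, h₂, h₃]
    rw [e1, e2, e3, hP, hV, Um_succ p hodd T n]
    exact step_odd h2 u₁ u₂ u₃ T (T ^ p) _ _ _ _ hu₁ hu₃ (Um_one_sq p hodd T)

/-- The product `Q_0 ⋯ Q_{n-1}` of the first `n` block matrices. -/
noncomputable def Pim {K : Type*} [Field K] (p : ℕ) (u₁ u₂ u₃ T : K) :
    ℕ → Matrix (Fin 2) (Fin 2) K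
  | 0 => 1
  | n + 1 => Pim p u₁ u₂ u₃ T n * Qm p u₁ u₂ u₃ T n

/-- Telescoping of `step`, with `W = Q_1 ⋯ Q_n`. -/
theorem exists_tail {K : Type*} [Field K] (p : ℕ) [Fact p.Prime] [CharP K p] (hodd : Odd p)
    (u₁ u₂ u₃ T : K) (hu₁ : u₁ ≠ 0) (hu₃ : u₃ ≠ 0) (h₁ : u₁ ^ p = u₁) (h₂ : u₂ ^ p = u₂)
    (h₃ : u₃ ^ p = u₃) (n : ℕ) :
    ∃ W : Matrix (Fin 2) (Fin 2) K,
      Pim p u₁ u₂ u₃ T (n + 1) = Qm p u₁ u₂ u₃ T 0 * W ∧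
      (frobenius K p).mapMatrix (Pim p u₁ u₂ u₃ T n) * Sm p u₁ u₃ T n
        = Sm p u₁ u₃ T 0 * W := by
  induction n with
  | zero => exact ⟨1, by simp [Pim], by simp [Pim]⟩
  | succ n ih =>
    obtain ⟨W, hW, hW'⟩ := ih
    refine ⟨W * Qm p u₁ u₂ u₃ T (n + 1), ?_, ?_⟩
    · rw [Pim, hW, mul_assoc]
    · rw [Pim, map_mul, mul_assoc, step p hodd u₁ u₂ u₃ T hu₁ hu₃ h₁ h₂ h₃, ← mul_assoc, hW',
        mul_assoc]

/-! ### The algebraic relation between consecutive blocks -/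

/-- The relation between `X / Y` and `X' / Y'`, the convergents at the ends of the first `n` and
of the first `n + 1` blocks, with denominators cleared: when `X' / Y'` and `X / Y` are both
replaced by `α` it becomes the equation to be proved. It comes from eliminating the first column
of `W` in `exists_tail`. -/
theorem column_relation {K : Type*} [Field K] (p : ℕ) [Fact p.Prime] [CharP K p] (hodd : Odd p)
    (u₁ u₂ u₃ T : K) (hu₁ : u₁ ≠ 0) (hu₃ : u₃ ≠ 0) (h₁ : u₁ ^ p = u₁) (h₂ : u₂ ^ p = u₂)
    (h₃ : u₃ ^ p = u₃) (hF : Um p T 1 ≠ 0) (n : ℕ) (x₂ y₂ x₃ y₃ F R X Y X' Y' : K)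
    (hx₂ : x₂ = u₁ * u₂ * T ^ 2 + 1) (hy₂ : y₂ = u₂ * T)
    (hx₃ : x₃ = u₁ * u₂ * u₃ * T ^ 3 + (u₁ + u₃) * T) (hy₃ : y₃ = u₂ * u₃ * T ^ 2 + 1)
    (hF' : F = Um p T 1) (hR : R = T ^ p - T * F)
    (hX : X = Pim p u₁ u₂ u₃ T n 0 0) (hY : Y = Pim p u₁ u₂ u₃ T n 1 0)
    (hX' : X' = Pim p u₁ u₂ u₃ T (n + 1) 0 0) (hY' : Y' = Pim p u₁ u₂ u₃ T (n + 1) 1 0) :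
    y₃ * X' * X ^ p - x₃ * X ^ p * Y' + (4 * u₁ * u₃ * y₂ * F - u₁ * y₃ * R) * X' * Y ^ p
      + u₁ * x₃ * R * Y' * Y ^ p - 4 * u₁ * u₃ * x₂ * F * Y' * Y ^ p = 0 := by
  have h2 : (2 : K) ≠ 0 := Ring.two_ne_zero (by
    rw [ringChar.eq K p]; rintro rfl; revert hodd; decide)
  have h4 : (4 : K) ≠ 0 := by
    have : (4 : K) = 2 * 2 := by norm_num
    rw [this]; exact mul_ne_zero h2 h2
  obtain ⟨W, hW, hW'⟩ := exists_tail p hodd u₁ u₂ u₃ T hu₁ hu₃ h₁ h₂ h₃ n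
  have hQ0 : Qm p u₁ u₂ u₃ T 0 = !![x₃, x₂; y₃, y₂] := by
    subst hx₂ hy₂ hx₃ hy₃
    ext i j
    fin_cases i <;> fin_cases j <;> simp [Qm, Mm, Bm, Um_zero] <;> ring
  obtain ⟨s, hs, c, d, hS⟩ : ∃ s : K, s ≠ 0 ∧ ∃ c d : K, Sm p u₁ u₃ T n = !![s, c; 0, d] := by
    unfold Sm
    split_ifs
    · exact ⟨_, by simp [*], _, _, rfl⟩
    · exact ⟨_, hF, _, _, rfl⟩
  have hS0 : Sm p u₁ u₃ T 0 = !![4 * u₁ * u₃ * F, u₁ * R; 0, 1] := by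
    subst hR hF'
    simp [Sm]
  rw [hQ0] at hW
  rw [hS0, hS] at hW'
  have a1 : X' = x₃ * W 0 0 + x₂ * W 1 0 := by
    rw [hX', hW]; simp [Matrix.mul_apply, Fin.sum_univ_two]
  have a2 : Y' = y₃ * W 0 0 + y₂ * W 1 0 := by
    rw [hY', hW]; simp [Matrix.mul_apply, Fin.sum_univ_two]
  have a3 : X ^ p * s = 4 * u₁ * u₃ * F * W 0 0 + u₁ * R * W 1 0 := by
    have := congrFun (congrFun hW' 0) 0
    simpa [Matrix.mul_apply, Fin.sum_univ_two, frobenius_def, ← hX] using this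
  have a4 : Y ^ p * s = W 1 0 := by
    have := congrFun (congrFun hW' 1) 0
    simpa [Matrix.mul_apply, Fin.sum_univ_two, frobenius_def, ← hY] using this
  -- `a3` and `a4` give `X ^ p` and `Y ^ p` only up to the factor `s`, which is nonzero
  refine (mul_eq_zero.1 (?_ : s * _ = 0)).resolve_left hs
  rw [a1, a2]
  linear_combination (y₃ * (x₃ * W 0 0 + x₂ * W 1 0) - x₃ * (y₃ * W 0 0 + y₂ * W 1 0)) * a3
    + ((4 * u₁ * u₃ * y₂ * F - u₁ * y₃ * R) * (x₃ * W 0 0 + x₂ * W 1 0)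
      + (u₁ * x₃ * R - 4 * u₁ * u₃ * x₂ * F) * (y₃ * W 0 0 + y₂ * W 1 0)) * a4

/-! ### Convergence of the continued fraction -/

open WithZero in
/-- A continued fraction over `k((X))` whose partial quotients have valuation at least `exp 1`
(that is, degree at least one in `1/X`) has Cauchy convergents: the valuations of the denominators
`y m` grow strictly, and two consecutive convergents differ by `± 1 / (y m * y (m + 1))`. The term
`x 0 / y 0` is the junk value `0`, which does not affect convergence. -/
theorem cauchy_of_recurrence (k : Type*) [Field k] (a x y : ℕ → LaurentSeries k)
    (hx0 : x 0 = 1) (hx1 : x 1 = a 0) (hy0 : y 0 = 0) (hy1 : y 1 = 1)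
    (hx : ∀ m, x (m + 2) = a (m + 1) * x (m + 1) + x m)
    (hy : ∀ m, y (m + 2) = a (m + 1) * y (m + 1) + y m)
    (ha : ∀ m, exp (1 : ℤ) ≤ Valued.v (a m)) :
    (∀ m, y (m + 1) ≠ 0) ∧ CauchySeq fun m => x m / y m := by
  have key : ∀ m, Valued.v (y m) < Valued.v (y (m + 1)) ∧ exp (m : ℤ) ≤ Valued.v (y (m + 1)) := by
    intro m
    induction m with
    | zero => simp [hy0, hy1]
    | succ m ih =>
      obtain ⟨h1, h2⟩ := ih
      have hpos : 0 < Valued.v (y (m + 1)) := lt_of_le_of_lt zero_le h1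
      have h3 : exp (1 : ℤ) * Valued.v (y (m + 1)) ≤ Valued.v (a (m + 1) * y (m + 1)) := by
        rw [map_mul]; exact mul_le_mul_left (ha _) _
      have h4 : Valued.v (y (m + 1)) < exp (1 : ℤ) * Valued.v (y (m + 1)) := by
        have : (1 : ℤᵐ⁰) < exp (1 : ℤ) := by rw [← exp_zero, exp_lt_exp]; norm_num
        calc Valued.v (y (m + 1)) = 1 * Valued.v (y (m + 1)) := (one_mul _).symm
          _ < _ := by gcongr
      have h5 : Valued.v (y (m + 2)) = Valued.v (a (m + 1) * y (m + 1)) := by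
        rw [hy, Valuation.map_add_eq_of_lt_left]
        exact h1.trans (h4.trans_le h3)
      refine ⟨?_, ?_⟩
      · rw [h5]; exact h4.trans_le h3
      · rw [h5]
        refine le_trans ?_ h3
        rw [Nat.cast_succ, add_comm, exp_add]
        exact mul_le_mul_right h2 _
  have hne : ∀ m, y (m + 1) ≠ 0 := by
    intro m h
    have := (key m).1
    rw [h, map_zero] at this
    exact not_lt_zero this
  have hdet : ∀ m, x (m + 1) * y m - x m * y (m + 1) = (-1) ^ (m + 1) := by
    intro m
    induction m with
    | zero => simp [hx0, hx1, hy0, hy1]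
    | succ m ih =>
      rw [hx, hy]
      rw [pow_succ, ← ih]; ring
  refine ⟨hne, ?_⟩
  have hstep : ∀ m, Valued.v (x (m + 1 + 1) / y (m + 1 + 1) - x (m + 1) / y (m + 1))
      ≤ exp (-((m : ℤ) + 1)) := by
    intro m
    have hd : x (m + 1 + 1) / y (m + 1 + 1) - x (m + 1) / y (m + 1)
        = (-1) ^ (m + 2) * (y (m + 1 + 1) * y (m + 1))⁻¹ := by
      have := hdet (m + 1)
      rw [← this, div_sub_div _ _ (hne _) (hne _), div_eq_mul_inv]
      ring
    rw [hd, map_mul, map_pow, Valuation.map_neg, map_one, one_pow, one_mul, map_inv₀, map_mul]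
    have h1 : exp ((m : ℤ) + 1) ≤ Valued.v (y (m + 1 + 1)) * Valued.v (y (m + 1)) := by
      have e1 := (key (m + 1)).2
      have e2 : (1 : ℤᵐ⁰) ≤ Valued.v (y (m + 1)) := by
        refine le_trans ?_ (key m).2
        rw [← exp_zero, exp_le_exp]; positivity
      push_cast at e1
      exact le_mul_of_le_of_one_le e1 e2
    rw [exp_neg]
    exact inv_anti₀ exp_pos h1
  have hdist : ∀ m k : ℕ, Valued.v (x (m + 1 + k) / y (m + 1 + k) - x (m + 1) / y (m + 1))
      ≤ exp (-((m : ℤ) + 1)) := by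
    intro m k
    induction k with
    | zero => simp
    | succ k ih =>
      rw [← sub_add_sub_cancel _ (x (m + 1 + k) / y (m + 1 + k))]
      refine Valuation.map_add_le _ ?_ ih
      have := hstep (m + k)
      rw [show m + k + 1 = m + 1 + k by ring] at this
      refine this.trans ?_
      rw [exp_le_exp]; push_cast; linarith
  rw [(Valued.hasBasis_uniformity (LaurentSeries k) ℤᵐ⁰).cauchySeq_iff']
  rintro γ -
  set g := MonoidWithZeroHom.ValueGroup₀.embedding γ.1 with hg
  have hg0 : g ≠ 0 := by
    rw [hg]; simp
  refine ⟨(-log g).toNat + 1, fun n hn => ?_⟩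
  obtain ⟨l, rfl⟩ := Nat.exists_eq_add_of_le hn
  simp only [Set.mem_ofPred_eq]
  rw [Valuation.restrict_lt_iff_lt_embedding, ← hg, Valuation.map_sub_swap]
  refine lt_of_lt_of_eq ((hdist _ l).trans_lt ?_) (exp_log hg0)
  rw [exp_lt_exp]
  omega

/-! ### The blocks as initial segments of the sequence of partial quotients -/

/-- The concatenation of the blocks `C_0, …, C_{N-1}`. -/
noncomputable def Lpoly (p : ℕ) (u₁ u₂ u₃ : ZMod p) (N : ℕ) : List (Polynomial (ZMod p)) :=
  ((List.range N).map (blockC p u₁ u₂ u₃)).flatten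

theorem Lpoly_succ (p : ℕ) (u₁ u₂ u₃ : ZMod p) (N : ℕ) :
    Lpoly p u₁ u₂ u₃ (N + 1) = Lpoly p u₁ u₂ u₃ N ++ blockC p u₁ u₂ u₃ N := by
  simp [Lpoly, List.range_succ]

theorem le_length_Lpoly (p : ℕ) (u₁ u₂ u₃ : ZMod p) (N : ℕ) :
    N ≤ (Lpoly p u₁ u₂ u₃ N).length := by
  induction N with
  | zero => simp
  | succ N ih =>
    have : 1 ≤ (blockC p u₁ u₂ u₃ N).length := by
      unfold blockC; split_ifs <;> simp
    rw [Lpoly_succ, List.length_append]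
    omega

theorem Lpoly_prefix (p : ℕ) (u₁ u₂ u₃ : ZMod p) (N k : ℕ) :
    ∃ t, Lpoly p u₁ u₂ u₃ (N + k) = Lpoly p u₁ u₂ u₃ N ++ t := by
  induction k with
  | zero => exact ⟨[], by simp⟩
  | succ k ih =>
    obtain ⟨t, ht⟩ := ih
    exact ⟨t ++ blockC p u₁ u₂ u₃ (N + k), by
      rw [← add_assoc, Lpoly_succ, ht, List.append_assoc]⟩

/-- `aSeq` reads its `m`-th term off `C_0 ⋯ C_m`; any concatenation of blocks that is long enough
gives the same value, since these lists extend one another. -/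
theorem aSeq_eq (p : ℕ) (u₁ u₂ u₃ : ZMod p) (N m : ℕ) (hm : m < (Lpoly p u₁ u₂ u₃ N).length) :
    aSeq p u₁ u₂ u₃ m = (Lpoly p u₁ u₂ u₃ N)[m] := by
  have hm' := le_length_Lpoly p u₁ u₂ u₃ (m + 1)
  have h : aSeq p u₁ u₂ u₃ m = (Lpoly p u₁ u₂ u₃ (m + 1)).getD m 0 := rfl
  rw [← List.getD_eq_getElem _ 0 hm, h]
  rcases le_total N (m + 1) with h1 | h1
  · obtain ⟨k, hk⟩ := Nat.exists_eq_add_of_le h1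
    obtain ⟨t, ht⟩ := Lpoly_prefix p u₁ u₂ u₃ N k
    rw [hk, ht, List.getD_append _ _ _ _ hm]
  · obtain ⟨k, hk⟩ := Nat.exists_eq_add_of_le h1
    obtain ⟨t, ht⟩ := Lpoly_prefix p u₁ u₂ u₃ (m + 1) k
    rw [hk, ht, List.getD_append _ _ _ _ (by omega)]

theorem map_aSeq (p : ℕ) (u₁ u₂ u₃ : ZMod p) (N : ℕ) :
    (List.range (Lpoly p u₁ u₂ u₃ N).length).map (aSeq p u₁ u₂ u₃) = Lpoly p u₁ u₂ u₃ N := by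
  apply List.ext_getElem
  · simp
  · intro i h1 h2
    rw [List.getElem_map, List.getElem_range, aSeq_eq p u₁ u₂ u₃ N i h2]

/-- The first column of `M(a 0) ⋯ M(a (m - 1))` consists of the `m`-th continuants. -/
theorem Lm_range {R : Type*} [CommRing R] (a x y : ℕ → R)
    (hx0 : x 0 = 1) (hx1 : x 1 = a 0) (hy0 : y 0 = 0) (hy1 : y 1 = 1)
    (hx : ∀ m, x (m + 2) = a (m + 1) * x (m + 1) + x m)
    (hy : ∀ m, y (m + 2) = a (m + 1) * y (m + 1) + y m) (m : ℕ) :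
    Lm ((List.range m).map a) 0 0 = x m ∧ Lm ((List.range m).map a) 1 0 = y m := by
  have h : ∀ m, Lm ((List.range (m + 1)).map a) = !![x (m + 1), x m; y (m + 1), y m] := by
    intro m
    induction m with
    | zero => simp [Lm, Mm, hx0, hx1, hy0, hy1]
    | succ m ih =>
      rw [List.range_succ, List.map_append, Lm_append, ih, hx, hy]
      ext i j
      fin_cases i <;> fin_cases j <;> simp [Lm, Mm] <;> ring
  cases m with
  | zero => simp [Lm, hx0, hy0]
  | succ m => rw [h]; simp

/-! ### Images in the Laurent series field -/

theorem evalT_C (p : ℕ) [Fact p.Prime] (u : ZMod p) :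
    evalT p (C u) = algebraMap (ZMod p) (LaurentSeries (ZMod p)) u := by
  simp [evalT]

theorem evalT_X (p : ℕ) [Fact p.Prime] : evalT p X = Tvar p := by
  simp [evalT]

theorem evalT_Fpoly (p : ℕ) [Fact p.Prime] : evalT p (Fpoly p) = Um p (Tvar p) 1 := by
  have h : evalT p 4 = 4 := map_ofNat _ 4
  simp [Fpoly, Um, evalT_X, h]

/-- `P_n = T^(p^n) (T² + 4)^((p^n - 1)/2)`, the explicit form of the recursion for `P_n`. -/
theorem evalT_Pseq (p : ℕ) [Fact p.Prime] (hodd : Odd p) (n : ℕ) :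
    evalT p (Pseq p n) = Tvar p ^ p ^ n * Um p (Tvar p) n := by
  induction n with
  | zero => simp [Pseq, Um_zero, evalT_X]
  | succ n ih =>
    rw [Pseq, map_mul, map_pow, ih, evalT_Fpoly, Um_succ p hodd _ n, pow_succ p n, pow_mul]
    ring

theorem Lm_block (p : ℕ) [Fact p.Prime] [CharP (LaurentSeries (ZMod p)) p] (hodd : Odd p)
    (u₁ u₂ u₃ : ZMod p) (hu₁ : u₁ ≠ 0) (hu₃ : u₃ ≠ 0) (n : ℕ) :
    Lm ((blockC p u₁ u₂ u₃ n).map (evalT p))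
      = Qm p (evalT p (C u₁)) (evalT p (C u₂)) (evalT p (C u₃)) (Tvar p) n := by
  have h2 : (2 : LaurentSeries (ZMod p)) ≠ 0 := Ring.two_ne_zero (by
    rw [ringChar.eq (LaurentSeries (ZMod p)) p]; rintro rfl; revert hodd; decide)
  have h1 : evalT p (C u₁) ≠ 0 := by rw [evalT_C]; simpa using hu₁
  have h3 : evalT p (C u₃) ≠ 0 := by rw [evalT_C]; simpa using hu₃
  have hinv : ∀ u : ZMod p, evalT p (C u⁻¹) = (evalT p (C u))⁻¹ := fun u => by
    rw [evalT_C, evalT_C, map_inv₀]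
  have hC2 : evalT p (C 2) = 2 := by rw [evalT_C, map_ofNat]
  have hC4 : evalT p (C 4) = 4 := by rw [evalT_C, map_ofNat]
  unfold blockC Qm
  split_ifs with h
  · rw [List.map_append, Lm_append, List.map_flatten, List.map_replicate]
    have := Lm_pairs_pow p hodd (2 * evalT p (C u₃))⁻¹ (Tvar p)
      (inv_ne_zero (mul_ne_zero h2 h3)) n
    rw [inv_inv] at this
    simp only [List.map_cons, List.map_nil, map_mul, hinv, evalT_X, hC2, evalT_Pseq p hodd]
    rw [this]
    simp [Lm, Um, mul_assoc]
  · rw [List.map_append, Lm_append, List.map_flatten, List.map_replicate]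
    have := Lm_pairs_pow p hodd (2 * evalT p (C u₁)) (Tvar p) (mul_ne_zero h2 h1) n
    simp only [List.map_cons, List.map_nil, map_mul, hinv, evalT_X, hC2, hC4,
      evalT_Pseq p hodd]
    rw [this]
    simp [Lm, Um, mul_assoc]

theorem Lm_Lpoly (p : ℕ) [Fact p.Prime] [CharP (LaurentSeries (ZMod p)) p] (hodd : Odd p)
    (u₁ u₂ u₃ : ZMod p) (hu₁ : u₁ ≠ 0) (hu₃ : u₃ ≠ 0) (n : ℕ) :
    Lm ((Lpoly p u₁ u₂ u₃ n).map (evalT p))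
      = Pim p (evalT p (C u₁)) (evalT p (C u₂)) (evalT p (C u₃)) (Tvar p) n := by
  induction n with
  | zero => simp [Lpoly, Lm, Pim]
  | succ n ih =>
    rw [Lpoly_succ, List.map_append, Lm_append, ih, Lm_block p hodd _ _ _ hu₁ hu₃, Pim]

/-! ### Valuations of the partial quotients -/

open WithZero in
theorem val_Tvar (p : ℕ) [Fact p.Prime] : Valued.v (Tvar p) = exp (1 : ℤ) := by
  have := LaurentSeries.valuation_X_pow (ZMod p) 1
  rw [pow_one] at this
  rw [Tvar, map_inv₀, this, ← exp_neg]
  simp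

open WithZero in
theorem val_const (p : ℕ) [Fact p.Prime] (u : ZMod p) (hu : u ≠ 0) :
    Valued.v (evalT p (C u)) = 1 := by
  -- a nonzero constant is a root of unity
  have h : Valued.v (evalT p (C u)) ^ (p - 1) = 1 := by
    rw [← map_pow, ← map_pow, ← map_pow, ZMod.pow_card_sub_one_eq_one hu]
    simp
  have hp : p - 1 ≠ 0 := by have := (Fact.out : p.Prime).two_le; omega
  exact (pow_eq_one_iff_of_nonneg zero_le hp).1 h

open WithZero in
theorem val_sq_add_four (p : ℕ) [Fact p.Prime] :
    Valued.v (Tvar p ^ 2 + 4) = exp (2 : ℤ) := by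
  have h4 : Valued.v (4 : LaurentSeries (ZMod p)) ≤ 1 := by
    have h : evalT p (C 4) = 4 := by rw [evalT_C, map_ofNat]
    by_cases h0 : (4 : ZMod p) = 0
    · rw [← h, h0]; simp
    · rw [← h, val_const p _ h0]
  have h2 : Valued.v (Tvar p ^ 2) = exp (2 : ℤ) := by
    rw [map_pow, val_Tvar, ← exp_nsmul]; simp
  rw [Valuation.map_add_eq_of_lt_left, h2]
  rw [h2]
  refine h4.trans_lt ?_
  rw [← exp_zero, exp_lt_exp]; norm_num

open WithZero in
theorem val_Pseq (p : ℕ) [Fact p.Prime] (hodd : Odd p) (n : ℕ) :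
    exp (1 : ℤ) ≤ Valued.v (evalT p (Pseq p n)) := by
  have h1 : 1 ≤ p ^ n := Nat.one_le_pow _ _ (Fact.out : p.Prime).pos
  rw [evalT_Pseq p hodd, Um, map_mul, map_pow, map_pow, val_Tvar, val_sq_add_four, ← exp_nsmul,
    ← exp_nsmul, ← exp_add, exp_le_exp]
  simp only [nsmul_eq_mul, mul_one]
  push_cast
  have : (1 : ℤ) ≤ (p : ℤ) ^ n := by exact_mod_cast h1
  omega

open WithZero in
theorem val_aSeq (p : ℕ) [Fact p.Prime] (hodd : Odd p)
    (u₁ u₂ u₃ : ZMod p) (hu₁ : u₁ ≠ 0) (hu₂ : u₂ ≠ 0) (hu₃ : u₃ ≠ 0) (m : ℕ) :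
    exp (1 : ℤ) ≤ Valued.v (evalT p (aSeq p u₁ u₂ u₃ m)) := by
  have hp2 : p ≠ 2 := by rintro rfl; revert hodd; decide
  have h2 : (2 : ZMod p) ≠ 0 := Ring.two_ne_zero (by rwa [ZMod.ringChar_zmod_n])
  have h4 : (4 : ZMod p) ≠ 0 := by
    have : (4 : ZMod p) = 2 * 2 := by norm_num
    rw [this]; exact mul_ne_zero h2 h2
  have hX : ∀ u : ZMod p, u ≠ 0 → exp (1 : ℤ) ≤ Valued.v (evalT p (C u * X)) := fun u hu => by
    rw [map_mul, map_mul, val_const p u hu, evalT_X, val_Tvar, one_mul]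
  have hP : ∀ (u : ZMod p) (n : ℕ), u ≠ 0 →
      exp (1 : ℤ) ≤ Valued.v (evalT p (C u * Pseq p n)) := fun u n hu => by
    rw [map_mul, map_mul, val_const p u hu, one_mul]; exact val_Pseq p hodd n
  have hB : ∀ n, ∀ q ∈ blockC p u₁ u₂ u₃ n, exp (1 : ℤ) ≤ Valued.v (evalT p q) := by
    intro n q hq
    unfold blockC at hq
    split_ifs at hq
    · simp only [List.mem_append, List.mem_cons, List.not_mem_nil, or_false, List.mem_flatten,
        List.mem_replicate] at hq
      rcases hq with (rfl | rfl | rfl) | ⟨l, ⟨-, rfl⟩, hq⟩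
      · exact hX _ hu₁
      · exact hP _ _ hu₂
      · exact hX _ hu₃
      · simp only [List.mem_cons, List.not_mem_nil, or_false] at hq
        rcases hq with rfl | rfl
        · exact hX _ (inv_ne_zero (mul_ne_zero h2 hu₃))
        · exact hX _ (mul_ne_zero h2 hu₃)
    · simp only [List.mem_append, List.mem_cons, List.not_mem_nil, or_false, List.mem_flatten,
        List.mem_replicate] at hq
      rcases hq with (rfl | rfl | rfl) | ⟨l, ⟨-, rfl⟩, hq⟩
      · exact hX _ (inv_ne_zero (mul_ne_zero h4 hu₃))
      · exact hP _ _ (mul_ne_zero (mul_ne_zero (mul_ne_zero h4 hu₁) hu₂) hu₃)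
      · exact hX _ (inv_ne_zero (mul_ne_zero h4 hu₁))
      · simp only [List.mem_cons, List.not_mem_nil, or_false] at hq
        rcases hq with rfl | rfl
        · exact hX _ (mul_ne_zero h2 hu₁)
        · exact hX _ (inv_ne_zero (mul_ne_zero h2 hu₁))
  have hm := le_length_Lpoly p u₁ u₂ u₃ (m + 1)
  rw [aSeq_eq p u₁ u₂ u₃ (m + 1) m hm]
  have hmem := List.getElem_mem (l := Lpoly p u₁ u₂ u₃ (m + 1)) hm
  generalize (Lpoly p u₁ u₂ u₃ (m + 1))[m] = q at *
  simp only [Lpoly, List.mem_flatten, List.mem_map] at hmem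
  obtain ⟨l, ⟨n, -, rfl⟩, hq⟩ := hmem
  exact hB n q hq

/-! ### The equation for the limit -/

theorem stmt_15 (p : ℕ) [Fact p.Prime] (hodd : Odd p)
    (u₁ u₂ u₃ : ZMod p) (hu₁ : u₁ ≠ 0) (hu₂ : u₂ ≠ 0) (hu₃ : u₃ ≠ 0)
    (x₂ y₂ x₃ y₃ F R : Polynomial (ZMod p))
    (hx₂ : x₂ = C (u₁ * u₂) * X ^ 2 + 1)
    (hy₂ : y₂ = C u₂ * X)
    (hx₃ : x₃ = C (u₁ * u₂ * u₃) * X ^ 3 + C (u₁ + u₃) * X)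
    (hy₃ : y₃ = C (u₂ * u₃) * X ^ 2 + 1)
    (hF : F = Fpoly p)
    (hR : R = X ^ p - X * F) :
    ∃ α : LaurentSeries (ZMod p),
      Tendsto (fun m : ℕ =>
          evalT p (xCont p u₁ u₂ u₃ m) / evalT p (yCont p u₁ u₂ u₃ m))
        atTop (nhds α) ∧
      evalT p y₃ * α ^ (p + 1) - evalT p x₃ * α ^ p
          + (evalT p (C (4 * u₁ * u₃)) * evalT p y₂ * evalT p F
              - evalT p (C u₁) * evalT p y₃ * evalT p R) * α
          + evalT p (C u₁) * evalT p x₃ * evalT p R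
          - evalT p (C (4 * u₁ * u₃)) * evalT p x₂ * evalT p F = 0 := by
  have : CharP (LaurentSeries (ZMod p)) p :=
    charP_of_injective_algebraMap (algebraMap (ZMod p) (LaurentSeries (ZMod p))).injective p
  set a : ℕ → LaurentSeries (ZMod p) := fun m => evalT p (aSeq p u₁ u₂ u₃ m) with ha
  set x : ℕ → LaurentSeries (ZMod p) := fun m => evalT p (xCont p u₁ u₂ u₃ m) with hx
  set y : ℕ → LaurentSeries (ZMod p) := fun m => evalT p (yCont p u₁ u₂ u₃ m) with hy
  have x0 : x 0 = 1 := by simp [hx, xCont, continuant]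
  have x1 : x 1 = a 0 := by simp [hx, ha, xCont, continuant]
  have y0 : y 0 = 0 := by simp [hy, yCont, continuant]
  have y1 : y 1 = 1 := by simp [hy, yCont, continuant]
  have xr : ∀ m, x (m + 2) = a (m + 1) * x (m + 1) + x m := fun m => by
    simp [hx, ha, xCont, continuant]
  have yr : ∀ m, y (m + 2) = a (m + 1) * y (m + 1) + y m := fun m => by
    simp [hy, ha, yCont, continuant]
  obtain ⟨hne, hcau⟩ := cauchy_of_recurrence (ZMod p) a x y x0 x1 y0 y1 xr yr
    (val_aSeq p hodd u₁ u₂ u₃ hu₁ hu₂ hu₃)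
  obtain ⟨α, hα⟩ := cauchySeq_tendsto_of_complete hcau
  refine ⟨α, hα, ?_⟩
  have hfix : ∀ u : ZMod p, evalT p (C u) ^ p = evalT p (C u) := fun u => by
    rw [← map_pow, ← map_pow, ZMod.pow_card]
  have hFne : Um p (Tvar p) 1 ≠ 0 := by
    refine pow_ne_zero _ fun h => ?_
    have := val_sq_add_four p
    rw [h, map_zero] at this
    exact WithZero.exp_ne_zero this.symm
  -- `ℓ n` is the index at which the first `n` blocks end
  set ℓ : ℕ → ℕ := fun n => (Lpoly p u₁ u₂ u₃ n).length with hℓ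
  have hcol : ∀ n,
      x (ℓ n) = Pim p (evalT p (C u₁)) (evalT p (C u₂)) (evalT p (C u₃)) (Tvar p) n 0 0 ∧
      y (ℓ n) = Pim p (evalT p (C u₁)) (evalT p (C u₂)) (evalT p (C u₃)) (Tvar p) n 1 0 := by
    intro n
    have h := Lm_range a x y x0 x1 y0 y1 xr yr (ℓ n)
    have h' : (List.range (ℓ n)).map a = (Lpoly p u₁ u₂ u₃ n).map (evalT p) := by
      conv_rhs => rw [← map_aSeq p u₁ u₂ u₃ n, List.map_map]
      rfl
    rw [h', Lm_Lpoly p hodd u₁ u₂ u₃ hu₁ hu₃ n] at h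
    exact ⟨h.1.symm, h.2.symm⟩
  have hℓt : Tendsto ℓ atTop atTop := tendsto_atTop_mono (le_length_Lpoly p u₁ u₂ u₃) tendsto_id
  set r : ℕ → LaurentSeries (ZMod p) := fun n => x (ℓ n) / y (ℓ n) with hr
  have hr1 : Tendsto r atTop (nhds α) := hα.comp hℓt
  have hr2 : Tendsto (fun n => r (n + 1)) atTop (nhds α) := hr1.comp (tendsto_add_atTop_nat 1)
  have hC4 : evalT p (C (4 * u₁ * u₃)) = 4 * evalT p (C u₁) * evalT p (C u₃) := by
    rw [C_mul, C_mul, map_mul, map_mul, evalT_C p 4, map_ofNat]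
  have hyℓ : ∀ n, y (ℓ (n + 1)) ≠ 0 := fun n => by
    have h := le_length_Lpoly p u₁ u₂ u₃ (n + 1)
    obtain ⟨k, hk⟩ := Nat.exists_eq_add_of_le' (show 1 ≤ ℓ (n + 1) by simp only [hℓ]; omega)
    rw [hk]; exact hne k
  -- `n = 0` is excluded because `y (ℓ 0) = y 0 = 0`
  have hrel : ∀ n, 1 ≤ n → evalT p y₃ * (r (n + 1) * r n ^ p) - evalT p x₃ * r n ^ p
          + (evalT p (C (4 * u₁ * u₃)) * evalT p y₂ * evalT p F
              - evalT p (C u₁) * evalT p y₃ * evalT p R) * r (n + 1)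
          + evalT p (C u₁) * evalT p x₃ * evalT p R
          - evalT p (C (4 * u₁ * u₃)) * evalT p x₂ * evalT p F = 0 := by
    intro n hn
    obtain ⟨l, rfl⟩ := Nat.exists_eq_add_of_le' hn
    have h := column_relation p hodd (evalT p (C u₁)) (evalT p (C u₂)) (evalT p (C u₃)) (Tvar p)
      (by rw [evalT_C]; simpa using hu₁) (by rw [evalT_C]; simpa using hu₃)
      (hfix _) (hfix _) (hfix _) hFne (l + 1)
      (evalT p x₂) (evalT p y₂) (evalT p x₃) (evalT p y₃) (evalT p F) (evalT p R)
      (x (ℓ (l + 1))) (y (ℓ (l + 1))) (x (ℓ (l + 1 + 1))) (y (ℓ (l + 1 + 1)))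
      (by rw [hx₂]; simp [evalT_X]) (by rw [hy₂]; simp [evalT_X])
      (by rw [hx₃]; simp [evalT_X]) (by rw [hy₃]; simp [evalT_X])
      (by rw [hF, evalT_Fpoly]) (by rw [hR]; simp [evalT_X])
      (hcol _).1 (hcol _).2 (hcol _).1 (hcol _).2
    have n1 := hyℓ l
    have n2 := hyℓ (l + 1)
    rw [hC4]
    simp only [hr, div_pow]
    field_simp
    linear_combination h
  have hlim := (((((hr2.mul (hr1.pow p)).const_mul (evalT p y₃)).sub
    ((hr1.pow p).const_mul (evalT p x₃))).add
    (hr2.const_mul (evalT p (C (4 * u₁ * u₃)) * evalT p y₂ * evalT p F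
              - evalT p (C u₁) * evalT p y₃ * evalT p R))).add
    (tendsto_const_nhds (x := evalT p (C u₁) * evalT p x₃ * evalT p R))).sub
    (tendsto_const_nhds (x := evalT p (C (4 * u₁ * u₃)) * evalT p x₂ * evalT p F))
  rw [pow_succ']
  refine tendsto_nhds_unique (hlim.congr' ?_) tendsto_const_nhds
  filter_upwards [eventually_ge_atTop 1] with n hn using hrel n hn
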